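/- arXiv:1209.0351 — 2 statements merged into one kernel-verified Lean document; each statement's English description precedes it below -/
import Mathlib

section
/- Let u : ℝ^N → ℝ be three times continuously differentiable, let ε > 0, and set y := u − Δu, φ := ‖∇u‖ and φ_ε := sqrt(ε² + ‖∇u‖²). Then at every point ξ ∈ ℝ^N one has φ(ξ)²/φ_ε(ξ) − Δφ_ε(ξ) ≤ ‖∇y(ξ)‖. -/
/-!
Write `g j = ∂_j u` and `s = φ_ε`, so that `s ^ 2 = ε ^ 2 + ∑ j, g j ^ 2` and `s > 0`.
Differentiating this identity twice in the direction `e_i` gives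
`s * ∂_i s = ∑ j, g j * ∂_i g j` and
`(∂_i s) ^ 2 + s * ∂_i ∂_i s = ∑ j, ((∂_i g j) ^ 2 + g j * ∂_i ∂_i g j)`.
By Cauchy–Schwarz the first identity yields `(∂_i s) ^ 2 ≤ ∑ j, (∂_i g j) ^ 2`, hence
`∑ j, g j * ∂_i ∂_i g j ≤ s * ∂_i ∂_i s` (`sum_mul_dd_le`). Summing over `i` and using that
partial derivatives commute, `∂_j y = g j - Δ (g j)`, one gets
`φ ^ 2 - s * Δ s ≤ ∑ j, g j * ∂_j y ≤ ‖∇u‖ * ‖∇y‖ ≤ s * ‖∇y‖`, and it remains to divide by `s`.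
-/

section DirectionalDerivatives

variable {E : Type*} [NormedAddCommGroup E] [NormedSpace ℝ E]

/-- The derivative of `f` in the direction `v`, as a function of the base point. -/
noncomputable def dirDeriv (v : E) (f : E → ℝ) : E → ℝ := fun z => fderiv ℝ f z v

lemma ContDiff.dirDeriv {f : E → ℝ} {m n : WithTop ℕ∞} (hf : ContDiff ℝ n f) (hmn : m + 1 ≤ n)
    (v : E) : ContDiff ℝ m (dirDeriv v f) :=
  (hf.fderiv_right hmn).clm_apply contDiff_const

lemma dirDeriv_comm {f : E → ℝ} (hf : ContDiff ℝ 2 f) (v w : E) :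
    dirDeriv v (dirDeriv w f) = dirDeriv w (dirDeriv v f) := by
  have hd : Differentiable ℝ (fderiv ℝ f) :=
    (hf.fderiv_right (m := 1) (by norm_num)).differentiable (by norm_num)
  have key : ∀ (a b z : E), dirDeriv a (dirDeriv b f) z = fderiv ℝ (fderiv ℝ f) z a b := by
    intro a b z
    have := ((hd z).hasFDerivAt.clm_apply (hasFDerivAt_const b z)).fderiv
    change fderiv ℝ (fun y => fderiv ℝ f y b) z a = _
    rw [this]
    simp
  funext z
  rw [key, key]
  exact (hf.contDiffAt.isSymmSndFDerivAt (by simp)) v w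

lemma dirDeriv_sum {ι : Type*} (t : Finset ι) {f : ι → E → ℝ} (hf : ∀ i, Differentiable ℝ (f i))
    (v : E) :
    dirDeriv v (fun z => ∑ i ∈ t, f i z) = fun z => ∑ i ∈ t, dirDeriv v (f i) z := by
  funext z
  simp only [dirDeriv]
  rw [fderiv_fun_sum (fun i _ => hf i z)]
  simp

lemma dirDeriv_mul {f g : E → ℝ} (hf : Differentiable ℝ f) (hg : Differentiable ℝ g) (v : E) :
    dirDeriv v (fun z => f z * g z) = fun z => f z * dirDeriv v g z + dirDeriv v f z * g z := by
  funext z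
  simp only [dirDeriv]
  rw [fderiv_fun_mul (hf z) (hg z)]
  simp [mul_comm]

/-- The Kato-type inequality for the regularised norm `s` of a vector field `g`, in a single
direction `v`. -/
lemma sum_mul_dd_le {ι : Type*} [Fintype ι] {g : ι → E → ℝ} {s : E → ℝ} {c : ℝ}
    (hg : ∀ j, ContDiff ℝ 2 (g j)) (hs : ContDiff ℝ 2 s) (hpos : ∀ z, 0 < s z) (hc : 0 ≤ c)
    (hsq : ∀ z, s z * s z = c + ∑ j, g j z * g j z) (v z : E) :
    ∑ j, g j z * dirDeriv v (dirDeriv v (g j)) z ≤ s z * dirDeriv v (dirDeriv v s) z := by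
  have hgd : ∀ j, Differentiable ℝ (g j) := fun j => (hg j).differentiable (by norm_num)
  have hsd : Differentiable ℝ s := hs.differentiable (by norm_num)
  have hgd' : ∀ j, Differentiable ℝ (dirDeriv v (g j)) := fun j =>
    ((hg j).dirDeriv (m := 1) (by norm_num) v).differentiable (by norm_num)
  have hsd' : Differentiable ℝ (dirDeriv v s) :=
    (hs.dirDeriv (m := 1) (by norm_num) v).differentiable (by norm_num)
  have h1 : (fun z => s z * dirDeriv v s z) = fun z => ∑ j, g j z * dirDeriv v (g j) z := by
    have h : (fun z => s z * s z) = fun z => c + ∑ j, g j z * g j z := funext hsq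
    have h' := congrArg (dirDeriv v) h
    have hconst : dirDeriv v (fun z => c + ∑ j, g j z * g j z)
        = dirDeriv v (fun z => ∑ j, g j z * g j z) := by
      funext z
      simp only [dirDeriv, fderiv_const_add]
    rw [hconst, dirDeriv_mul hsd hsd, dirDeriv_sum _ (fun j => (hgd j).fun_mul (hgd j))] at h'
    funext z
    have h'' := congrFun h' z
    simp only [dirDeriv_mul (hgd _) (hgd _)] at h''
    have e : ∑ j, (g j z * dirDeriv v (g j) z + dirDeriv v (g j) z * g j z)
        = 2 * ∑ j, g j z * dirDeriv v (g j) z := by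
      rw [Finset.mul_sum]
      exact Finset.sum_congr rfl fun j _ => by ring
    rw [e] at h''
    linarith
  have h2 := congrFun (congrArg (dirDeriv v) h1) z
  rw [dirDeriv_mul hsd hsd', dirDeriv_sum _ (fun j => (hgd j).fun_mul (hgd' j))] at h2
  simp only [dirDeriv_mul (hgd _) (hgd' _)] at h2
  rw [Finset.sum_add_distrib] at h2
  have h1z : s z * dirDeriv v s z = ∑ j, g j z * dirDeriv v (g j) z := congrFun h1 z
  have hcs := Finset.sum_mul_sq_le_sq_mul_sq Finset.univ (fun j => g j z)
    (fun j => dirDeriv v (g j) z)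
  have hA : (dirDeriv v s z) * (dirDeriv v s z)
      ≤ ∑ j, dirDeriv v (g j) z * dirDeriv v (g j) z := by
    have hss : ∑ j, g j z ^ 2 ≤ s z ^ 2 := by
      have := hsq z
      simp only [pow_two]
      linarith
    rw [← h1z, mul_pow] at hcs
    have hB : 0 ≤ ∑ j, dirDeriv v (g j) z ^ 2 := Finset.sum_nonneg fun j _ => sq_nonneg _
    have h3 := hcs.trans (mul_le_mul_of_nonneg_right hss hB)
    have h4 := le_of_mul_le_mul_left h3 (pow_pos (hpos z) 2)
    simpa only [pow_two] using h4
  linarith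

end DirectionalDerivatives

lemma gradient_apply_eq_dirDeriv {N : ℕ} (f : EuclideanSpace ℝ (Fin N) → ℝ)
    (z : EuclideanSpace ℝ (Fin N)) (j : Fin N) :
    gradient f z j = dirDeriv (EuclideanSpace.single j 1) f z := by
  have h : inner ℝ (gradient f z) (EuclideanSpace.single j (1 : ℝ))
      = fderiv ℝ f z (EuclideanSpace.single j 1) := by
    simp [gradient]
  rw [EuclideanSpace.inner_single_right] at h
  simpa [dirDeriv] using h

/-- Let u : ℝ^N → ℝ be C³, ε > 0, y := u − Δu, φ := ‖∇u‖ and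
φ_ε := sqrt(ε² + ‖∇u‖²). Then at every point ξ one has
φ(ξ)²/φ_ε(ξ) − Δφ_ε(ξ) ≤ ‖∇y(ξ)‖. Here Δ is the Laplacian (sum of second
partial derivatives) and ∇ is the gradient. -/
theorem stmt_10 (N : ℕ) (hN : 1 ≤ N) (eps : ℝ) (heps : 0 < eps)
    (u : EuclideanSpace ℝ (Fin N) → ℝ) (hu : ContDiff ℝ 3 u)
    (lap : (EuclideanSpace ℝ (Fin N) → ℝ) → EuclideanSpace ℝ (Fin N) → ℝ)
    (hlap : ∀ f x, lap f x = ∑ i : Fin N,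
      fderiv ℝ (fun z => fderiv ℝ f z (EuclideanSpace.single i 1)) x
        (EuclideanSpace.single i 1))
    (y φ φε : EuclideanSpace ℝ (Fin N) → ℝ)
    (hy : ∀ ξ, y ξ = u ξ - lap u ξ)
    (hφ : ∀ ξ, φ ξ = ‖gradient u ξ‖)
    (hφε : ∀ ξ, φε ξ = Real.sqrt (eps ^ 2 + ‖gradient u ξ‖ ^ 2)) :
    ∀ ξ, φ ξ ^ 2 / φε ξ - lap φε ξ ≤ ‖gradient y ξ‖ := by
  intro ξ
  let e : Fin N → EuclideanSpace ℝ (Fin N) := fun i => EuclideanSpace.single i 1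
  let g : Fin N → EuclideanSpace ℝ (Fin N) → ℝ := fun j => dirDeriv (e j) u
  have hg : ∀ j, ContDiff ℝ 2 (g j) := fun j => hu.dirDeriv (by norm_num) (e j)
  have hlap' : ∀ f x, lap f x = ∑ i, dirDeriv (e i) (dirDeriv (e i) f) x := hlap
  have hnorm : ∀ z, ‖gradient u z‖ ^ 2 = ∑ j, g j z * g j z := by
    intro z
    rw [EuclideanSpace.real_norm_sq_eq]
    exact Finset.sum_congr rfl fun j _ => by rw [gradient_apply_eq_dirDeriv, pow_two]
  have harg : ∀ z, 0 < eps ^ 2 + ∑ j, g j z * g j z := fun z =>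
    add_pos_of_pos_of_nonneg (pow_pos heps 2)
      (Finset.sum_nonneg fun j _ => mul_self_nonneg _)
  have hφε' : φε = fun z => Real.sqrt (eps ^ 2 + ∑ j, g j z * g j z) := by
    funext z
    rw [hφε, hnorm]
  have hpos : ∀ z, 0 < φε z := fun z => by
    rw [hφε']
    exact Real.sqrt_pos.2 (harg z)
  have hsq : ∀ z, φε z * φε z = eps ^ 2 + ∑ j, g j z * g j z := fun z => by
    rw [hφε']
    exact Real.mul_self_sqrt (harg z).le
  have hs : ContDiff ℝ 2 φε := by
    rw [hφε']
    exact (contDiff_const.add (ContDiff.sum fun j _ => (hg j).mul (hg j))).sqrt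
      (fun z => ne_of_gt (harg z))
  -- Third derivatives of `u` commute, so `∂_j` passes through the Laplacian.
  have hdy : ∀ j, dirDeriv (e j) y ξ = g j ξ - ∑ i, dirDeriv (e i) (dirDeriv (e i) (g j)) ξ := by
    intro j
    have hdd : ∀ i, Differentiable ℝ (dirDeriv (e i) (dirDeriv (e i) u)) := fun i =>
      ((hg i).dirDeriv (m := 1) (by norm_num) (e i)).differentiable (by norm_num)
    have hy' : y = fun z => u z - ∑ i, dirDeriv (e i) (dirDeriv (e i) u) z := by
      funext z
      rw [hy, hlap']
    have hsub : dirDeriv (e j) y ξ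
        = g j ξ - dirDeriv (e j) (fun z => ∑ i, dirDeriv (e i) (dirDeriv (e i) u) z) ξ := by
      rw [hy']
      simp only [g, dirDeriv.eq_1 (e j)]
      rw [fderiv_fun_sub (hu.differentiable (by norm_num) ξ)
        (Differentiable.fun_sum (fun i _ => hdd i) ξ)]
      rfl
    rw [hsub, dirDeriv_sum _ hdd]
    congr 1
    refine Finset.sum_congr rfl fun i _ => ?_
    rw [dirDeriv_comm (hg i) (e j) (e i), dirDeriv_comm (hu.of_le (by norm_num)) (e j) (e i)]
  have hkato : ∑ j, g j ξ * ∑ i, dirDeriv (e i) (dirDeriv (e i) (g j)) ξ ≤ φε ξ * lap φε ξ := by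
    rw [hlap', Finset.mul_sum]
    simp only [Finset.mul_sum]
    rw [Finset.sum_comm]
    exact Finset.sum_le_sum fun i _ => sum_mul_dd_le hg hs hpos (sq_nonneg eps) hsq (e i) ξ
  have hinner : ∑ j, g j ξ * dirDeriv (e j) y ξ ≤ ‖gradient u ξ‖ * ‖gradient y ξ‖ := by
    refine le_trans (le_of_eq ?_) (real_inner_le_norm (gradient u ξ) (gradient y ξ))
    rw [PiLp.inner_apply]
    refine Finset.sum_congr rfl fun j _ => ?_
    rw [gradient_apply_eq_dirDeriv, gradient_apply_eq_dirDeriv]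
    simp [g, e, mul_comm]
  have hle : ‖gradient u ξ‖ ≤ φε ξ := by
    rw [hφε]
    exact Real.le_sqrt_of_sq_le (by nlinarith)
  have hfin : φ ξ ^ 2 - φε ξ * lap φε ξ ≤ φε ξ * ‖gradient y ξ‖ := by
    have h1 := mul_le_mul_of_nonneg_right hle (norm_nonneg (gradient y ξ))
    simp only [hdy, mul_sub, Finset.sum_sub_distrib] at hinner
    rw [hφ, hnorm]
    linarith
  rw [sub_le_iff_le_add, div_le_iff₀ (hpos ξ)]
  linarith
end

section
/- Let g : ℝ → ℝ be twice continuously differentiable with g(0) = 0, g nonnegative and convex on [0,∞), g nondecreasing on [0,∞), and g(t) > 0 for t > 0. Let u : ℝ^N → ℝ be three times continuously differentiable, ε > 0, y := u − Δu, φ := ‖∇u‖ and φ_ε := sqrt(ε² + ‖∇u‖²). Then at every point ξ ∈ ℝ^N one has g(φ(ξ))²/g(φ_ε(ξ)) − Δ(g∘φ_ε)(ξ) ≤ g'(φ_ε(ξ))·‖∇y(ξ)‖ + g(φ(ξ))²/g(φ_ε(ξ)) − g'(φ_ε(ξ))·φ(ξ)²/φ_ε(ξ); equivalently, g'(φ_ε(ξ))·(φ(ξ)²/φ_ε(ξ)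 − ‖∇y(ξ)‖) ≤ Δ(g∘φ_ε)(ξ). -/
/-!
Write `p_j = ∂_j u`, `h = φ_ε`, so `h ^ 2 = ε ^ 2 + ∑ p_j ^ 2` and `h > 0`. Differentiating this
identity twice in direction `i` gives
`(∂_i h) ^ 2 + h ∂_i ∂_i h = ∑_j (∂_i p_j) ^ 2 + ∑_j p_j ∂_i ∂_i p_j`.
By Cauchy-Schwarz, `h ^ 2 (∂_i h) ^ 2 = (∑_j p_j ∂_i p_j) ^ 2 ≤ h ^ 2 ∑_j (∂_i p_j) ^ 2`, hence
`h ∂_i ∂_i h ≥ ∑_j p_j ∂_i ∂_i p_j` (`mul_dirD_dirD_ge`). Summing over `i` and commuting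
derivatives, `Δ p_j = ∂_j Δ u = p_j - ∂_j y`, so
`h Δ h ≥ ‖∇u‖ ^ 2 - ⟨∇u, ∇y⟩ ≥ φ ^ 2 - h ‖∇y‖`.
The chain rule `Δ (g ∘ h) = g''(h) ‖∇h‖ ^ 2 + g'(h) Δ h` together with `g'' ≥ 0` (convexity) and
`g' ≥ 0` (monotonicity) finishes the proof.
-/

section DirectionalDerivative

variable {E : Type*} [NormedAddCommGroup E] [NormedSpace ℝ E]

/-- The directional derivative of `f` along `v`, as a function of the base point. -/
noncomputable def dirD (v : E) (f : E → ℝ) : E → ℝ := fun z => fderiv ℝ f z v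

lemma contDiff_dirD {f : E → ℝ} {n m : WithTop ℕ∞} (hf : ContDiff ℝ n f) (hmn : m + 1 ≤ n)
    (v : E) : ContDiff ℝ m (dirD v f) :=
  (hf.fderiv_right hmn).clm_apply contDiff_const

lemma dirD_comm {f : E → ℝ} (hf : ContDiff ℝ 2 f) (v w : E) :
    dirD v (dirD w f) = dirD w (dirD v f) := by
  funext x
  have hd : DifferentiableAt ℝ (fderiv ℝ f) x :=
    (hf.fderiv_right (m := 1) (by norm_num)).differentiable (by norm_num) x
  have key : ∀ a b : E, dirD a (dirD b f) x = fderiv ℝ (fderiv ℝ f) x a b := by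
    intro a b
    have := hd.hasFDerivAt.clm_apply (hasFDerivAt_const b x)
    unfold dirD
    rw [this.fderiv]
    simp
  rw [key, key]
  exact (hf.contDiffAt.isSymmSndFDerivAt (by simp)) v w

lemma dirD_sum {ι : Type*} (s : Finset ι) {f : ι → E → ℝ} (hf : ∀ i, Differentiable ℝ (f i))
    (v x : E) : dirD v (fun z => ∑ i ∈ s, f i z) x = ∑ i ∈ s, dirD v (f i) x := by
  unfold dirD
  rw [fderiv_fun_sum (fun i _ => hf i x)]
  simp

lemma dirD_mul {f k : E → ℝ} (hf : Differentiable ℝ f) (hk : Differentiable ℝ k) (v x : E) :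
    dirD v (fun z => f z * k z) x = f x * dirD v k x + dirD v f x * k x := by
  unfold dirD
  rw [fderiv_fun_mul (hf x) (hk x)]
  simp [mul_comm]

lemma dirD_sub {f k : E → ℝ} (hf : Differentiable ℝ f) (hk : Differentiable ℝ k) (v x : E) :
    dirD v (fun z => f z - k z) x = dirD v f x - dirD v k x := by
  unfold dirD
  rw [fderiv_fun_sub (hf x) (hk x)]
  simp

lemma dirD_comp {g : ℝ → ℝ} {h : E → ℝ} (hg : Differentiable ℝ g) (hh : Differentiable ℝ h)
    (v x : E) : dirD v (fun z => g (h z)) x = deriv g (h x) * dirD v h x := by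
  have := (hg (h x)).hasDerivAt.comp_hasFDerivAt x (hh x).hasFDerivAt
  have h2 : fderiv ℝ (fun z => g (h z)) x = deriv g (h x) • fderiv ℝ h x := this.fderiv
  unfold dirD
  rw [h2]
  simp

lemma dirD_dirD_comp {g : ℝ → ℝ} {h : E → ℝ} (hg : ContDiff ℝ 2 g) (hh : ContDiff ℝ 2 h)
    (v x : E) : dirD v (dirD v (g ∘ h)) x
      = deriv (deriv g) (h x) * dirD v h x ^ 2 + deriv g (h x) * dirD v (dirD v h) x := by
  have hg1 : Differentiable ℝ g := hg.differentiable (by norm_num)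
  have hg2 : Differentiable ℝ (deriv g) := by
    have h1 : ContDiff ℝ (1 + 1) g := by simpa [one_add_one_eq_two] using hg
    exact (contDiff_succ_iff_deriv.1 h1).2.2.differentiable (by norm_num)
  have hh1 : Differentiable ℝ h := hh.differentiable (by norm_num)
  have hh2 : Differentiable ℝ (dirD v h) :=
    (contDiff_dirD (m := 1) hh (by norm_num) v).differentiable (by norm_num)
  have e : dirD v (g ∘ h) = fun z => deriv g (h z) * dirD v h z :=
    funext fun z => dirD_comp hg1 hh1 v z
  rw [e, dirD_mul (f := fun z => deriv g (h z)) (hg2.comp hh1) hh2, dirD_comp hg2 hh1]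
  ring

/-- The Kato-type inequality for the regularized norm `h = √(c + ∑ p_j²)` in one direction. -/
lemma mul_dirD_dirD_ge {ι : Type*} [Fintype ι] {p : ι → E → ℝ} {h : E → ℝ} {c : ℝ}
    (hp : ∀ j, ContDiff ℝ 2 (p j)) (hh : ContDiff ℝ 2 h) (hpos : ∀ z, 0 < h z)
    (hc : 0 ≤ c) (heq : ∀ z, h z * h z = c + ∑ j, p j z * p j z) (v x : E) :
    ∑ j, p j x * dirD v (dirD v (p j)) x ≤ h x * dirD v (dirD v h) x := by
  have hh1 : Differentiable ℝ h := hh.differentiable (by norm_num)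
  have hh2 : Differentiable ℝ (dirD v h) :=
    (contDiff_dirD (m := 1) hh (by norm_num) v).differentiable (by norm_num)
  have hp1 : ∀ j, Differentiable ℝ (p j) := fun j => (hp j).differentiable (by norm_num)
  have hp2 : ∀ j, Differentiable ℝ (dirD v (p j)) := fun j =>
    (contDiff_dirD (m := 1) (hp j) (by norm_num) v).differentiable (by norm_num)
  have d1 : ∀ z, h z * dirD v h z = ∑ j, p j z * dirD v (p j) z := by
    intro z
    have e : (fun z => h z * h z - ∑ j, p j z * p j z) = fun _ => c := by
      funext z; linarith [heq z]
    have h1 := dirD_sub (f := fun z => h z * h z) (k := fun z => ∑ j, p j z * p j z)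
      (hh1.mul hh1) (by fun_prop) v z
    rw [e, dirD_mul hh1 hh1, dirD_sum (f := fun j z => p j z * p j z) _
      (fun j => (hp1 j).mul (hp1 j))] at h1
    have h0 : dirD v (fun _ : E => c) z = 0 := by simp [dirD]
    have h2 : ∑ j, dirD v (fun z => p j z * p j z) z = 2 * ∑ j, p j z * dirD v (p j) z := by
      rw [Finset.mul_sum]
      exact Finset.sum_congr rfl fun j _ => by rw [dirD_mul (hp1 j) (hp1 j)]; ring
    rw [h0, h2] at h1
    linarith
  have d2 : h x * dirD v (dirD v h) x + dirD v h x ^ 2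
      = ∑ j, p j x * dirD v (dirD v (p j)) x + ∑ j, dirD v (p j) x ^ 2 := by
    have e : dirD v (fun z => h z * dirD v h z) x
        = dirD v (fun z => ∑ j, p j z * dirD v (p j) z) x := by rw [funext d1]
    rw [dirD_mul hh1 hh2, dirD_sum (f := fun j z => p j z * dirD v (p j) z) _
      (fun j => (hp1 j).mul (hp2 j))] at e
    rw [← Finset.sum_add_distrib, pow_two, e]
    exact Finset.sum_congr rfl fun j _ => by rw [dirD_mul (hp1 j) (hp2 j)]; ring
  have cs : dirD v h x ^ 2 ≤ ∑ j, dirD v (p j) x ^ 2 := by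
    have h1 := Finset.sum_mul_sq_le_sq_mul_sq Finset.univ (fun j => p j x)
      (fun j => dirD v (p j) x)
    have h2 : ∑ j, p j x ^ 2 ≤ h x ^ 2 := by
      have := heq x
      simp only [← pow_two] at this
      linarith
    have h3 : 0 ≤ ∑ j, dirD v (p j) x ^ 2 := Finset.sum_nonneg fun j _ => sq_nonneg _
    rw [← d1 x] at h1
    have h4 : h x ^ 2 * dirD v h x ^ 2 ≤ h x ^ 2 * ∑ j, dirD v (p j) x ^ 2 := by
      nlinarith [mul_le_mul_of_nonneg_right h2 h3]
    exact le_of_mul_le_mul_left h4 (pow_pos (hpos x) 2)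
  linarith

end DirectionalDerivative

lemma gradient_apply_eq_dirD {N : ℕ} (f : EuclideanSpace ℝ (Fin N) → ℝ)
    (x : EuclideanSpace ℝ (Fin N)) (j : Fin N) :
    gradient f x j = dirD (EuclideanSpace.single j 1) f x := by
  have h := InnerProductSpace.toDual_symm_apply (𝕜 := ℝ)
    (x := EuclideanSpace.single j (1 : ℝ)) (y := fderiv ℝ f x)
  rw [EuclideanSpace.inner_single_right] at h
  simpa [gradient, dirD] using h

lemma deriv_deriv_nonneg_of_convexOn {g : ℝ → ℝ} (hg : Differentiable ℝ g)
    (hc : ConvexOn ℝ (Set.Ici (0 : ℝ)) g) {t : ℝ} (ht : 0 < t) : 0 ≤ deriv (deriv g) t := by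
  have hm : MonotoneOn (deriv g) (Set.Ici 0) := hc.monotoneOn_deriv fun x _ => hg x
  have := hm.derivWithin_nonneg (x := t)
  rwa [derivWithin_of_mem_nhds (Ici_mem_nhds ht)] at this

lemma deriv_nonneg_of_monotoneOn_Ici {g : ℝ → ℝ} (hm : MonotoneOn g (Set.Ici (0 : ℝ)))
    {t : ℝ} (ht : 0 < t) : 0 ≤ deriv g t := by
  have := hm.derivWithin_nonneg (x := t)
  rwa [derivWithin_of_mem_nhds (Ici_mem_nhds ht)] at this


/-- Let g : ℝ → ℝ be C² with g(0) = 0, g nonnegative, convex and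
nondecreasing on [0,∞), and g(t) > 0 for t > 0. Let u : ℝ^N → ℝ be C³, ε > 0,
y := u − Δu, φ := ‖∇u‖ and φ_ε := sqrt(ε² + ‖∇u‖²). Then at every ξ,
g(φ(ξ))²/g(φ_ε(ξ)) − Δ(g∘φ_ε)(ξ)
  ≤ g'(φ_ε(ξ))·‖∇y(ξ)‖ + g(φ(ξ))²/g(φ_ε(ξ)) − g'(φ_ε(ξ))·φ(ξ)²/φ_ε(ξ);
equivalently, g'(φ_ε(ξ))·(φ(ξ)²/φ_ε(ξ) − ‖∇y(ξ)‖) ≤ Δ(g∘φ_ε)(ξ). -/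
theorem stmt_15 (N : ℕ) (hN : 1 ≤ N)
    (g : ℝ → ℝ) (hg : ContDiff ℝ 2 g) (hg0 : g 0 = 0)
    (hgnonneg : ∀ t ∈ Set.Ici (0 : ℝ), 0 ≤ g t)
    (hgconv : ConvexOn ℝ (Set.Ici (0 : ℝ)) g)
    (hgmono : MonotoneOn g (Set.Ici (0 : ℝ)))
    (hgpos : ∀ t : ℝ, 0 < t → 0 < g t)
    (u : EuclideanSpace ℝ (Fin N) → ℝ) (hu : ContDiff ℝ 3 u)
    (eps : ℝ) (heps : 0 < eps)
    (lap : (EuclideanSpace ℝ (Fin N) → ℝ) → EuclideanSpace ℝ (Fin N) → ℝ)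
    (hlap : ∀ f x, lap f x = ∑ i : Fin N,
      fderiv ℝ (fun z => fderiv ℝ f z (EuclideanSpace.single i 1)) x
        (EuclideanSpace.single i 1))
    (y φ φε : EuclideanSpace ℝ (Fin N) → ℝ)
    (hy : ∀ ξ, y ξ = u ξ - lap u ξ)
    (hφ : ∀ ξ, φ ξ = ‖gradient u ξ‖)
    (hφε : ∀ ξ, φε ξ = Real.sqrt (eps ^ 2 + ‖gradient u ξ‖ ^ 2)) :
    ∀ ξ,
      (g (φ ξ)) ^ 2 / g (φε ξ) - lap (g ∘ φε) ξ
        ≤ deriv g (φε ξ) * ‖gradient y ξ‖ + (g (φ ξ)) ^ 2 / g (φε ξ)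
          - deriv g (φε ξ) * (φ ξ ^ 2 / φε ξ) ∧
      deriv g (φε ξ) * (φ ξ ^ 2 / φε ξ - ‖gradient y ξ‖) ≤ lap (g ∘ φε) ξ := by
  intro ξ
  suffices hmain : deriv g (φε ξ) * (φ ξ ^ 2 / φε ξ - ‖gradient y ξ‖) ≤ lap (g ∘ φε) ξ from
    ⟨by linarith, hmain⟩
  let e : Fin N → EuclideanSpace ℝ (Fin N) := fun i => EuclideanSpace.single i 1
  have hlap' : ∀ f x, lap f x = ∑ i, dirD (e i) (dirD (e i) f) x := hlap
  let p : Fin N → EuclideanSpace ℝ (Fin N) → ℝ := fun j => dirD (e j) u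
  have hp : ∀ j, ContDiff ℝ 2 (p j) := fun j => contDiff_dirD hu (by norm_num) _
  have hnorm : ∀ z, ‖gradient u z‖ ^ 2 = ∑ j, p j z * p j z := by
    intro z
    rw [EuclideanSpace.real_norm_sq_eq]
    exact Finset.sum_congr rfl fun j _ => by rw [gradient_apply_eq_dirD, pow_two]
  have hargpos : ∀ z, 0 < eps ^ 2 + ∑ j, p j z * p j z := fun z =>
    add_pos_of_pos_of_nonneg (pow_pos heps 2) (Finset.sum_nonneg fun j _ => mul_self_nonneg _)
  have hφε' : φε = fun z => Real.sqrt (eps ^ 2 + ∑ j, p j z * p j z) :=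
    funext fun z => by rw [hφε, hnorm]
  have hpos : ∀ z, 0 < φε z := fun z => by
    rw [hφε']; exact Real.sqrt_pos.2 (hargpos z)
  have hsq : ∀ z, φε z * φε z = eps ^ 2 + ∑ j, p j z * p j z := fun z => by
    rw [hφε']; exact Real.mul_self_sqrt (hargpos z).le
  have hh : ContDiff ℝ 2 φε := by
    rw [hφε']
    refine ContDiff.sqrt ?_ fun z => (hargpos z).ne'
    exact contDiff_const.add (ContDiff.sum fun j _ => (hp j).mul (hp j))
  have hu2 : ContDiff ℝ 2 u := hu.of_le (by norm_num)
  have hdd : ∀ i, Differentiable ℝ (dirD (e i) (dirD (e i) u)) := fun i =>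
    (contDiff_dirD (m := 1) (hp i) (by norm_num) _).differentiable (by norm_num)
  -- `Δ ∂_j u = ∂_j Δ u = ∂_j u - ∂_j y`
  have hlapp : ∀ j, ∑ i, dirD (e i) (dirD (e i) (p j)) ξ = p j ξ - dirD (e j) y ξ := by
    intro j
    have hy' : y = fun z => u z - ∑ i, dirD (e i) (dirD (e i) u) z :=
      funext fun z => by rw [hy, hlap']
    rw [hy', dirD_sub (hu2.differentiable (by norm_num)) (Differentiable.fun_sum fun i _ => hdd i),
      dirD_sum _ hdd, sub_sub_cancel]
    refine Finset.sum_congr rfl fun i _ => ?_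
    rw [dirD_comm hu2 (e i) (e j), dirD_comm (hp i) (e i) (e j)]
  -- `φε Δφε ≥ ‖∇u‖² - ⟨∇u, ∇y⟩`
  have hkato : φ ξ ^ 2 - ∑ j, p j ξ * dirD (e j) y ξ
      ≤ φε ξ * ∑ i, dirD (e i) (dirD (e i) φε) ξ := by
    calc φ ξ ^ 2 - ∑ j, p j ξ * dirD (e j) y ξ
        = ∑ j, p j ξ * ∑ i, dirD (e i) (dirD (e i) (p j)) ξ := by
          rw [hφ, hnorm, ← Finset.sum_sub_distrib]
          exact Finset.sum_congr rfl fun j _ => by rw [hlapp]; ring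
      _ = ∑ i, ∑ j, p j ξ * dirD (e i) (dirD (e i) (p j)) ξ := by
          simp only [Finset.mul_sum]
          exact Finset.sum_comm
      _ ≤ ∑ i, φε ξ * dirD (e i) (dirD (e i) φε) ξ :=
          Finset.sum_le_sum fun i _ =>
            mul_dirD_dirD_ge hp hh hpos (sq_nonneg eps) hsq (e i) ξ
      _ = _ := by rw [Finset.mul_sum]
  have hinner : ∑ j, p j ξ * dirD (e j) y ξ ≤ φε ξ * ‖gradient y ξ‖ := by
    have h1 : ∑ j, p j ξ * dirD (e j) y ξ = inner ℝ (gradient u ξ) (gradient y ξ) := by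
      rw [PiLp.inner_apply]
      refine Finset.sum_congr rfl fun j _ => ?_
      rw [gradient_apply_eq_dirD, gradient_apply_eq_dirD]
      simp [p, e, mul_comm]
    have h2 : ‖gradient u ξ‖ ≤ φε ξ := by
      rw [hφε]
      exact Real.le_sqrt_of_sq_le (by linarith [sq_nonneg eps])
    rw [h1]
    exact (real_inner_le_norm _ _).trans (mul_le_mul_of_nonneg_right h2 (norm_nonneg _))
  have hΔ : φ ξ ^ 2 / φε ξ - ‖gradient y ξ‖ ≤ ∑ i, dirD (e i) (dirD (e i) φε) ξ := by
    rw [sub_le_iff_le_add, div_le_iff₀ (hpos ξ)]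
    linarith
  have hg1 : Differentiable ℝ g := hg.differentiable (by norm_num)
  calc deriv g (φε ξ) * (φ ξ ^ 2 / φε ξ - ‖gradient y ξ‖)
      ≤ deriv g (φε ξ) * ∑ i, dirD (e i) (dirD (e i) φε) ξ :=
        mul_le_mul_of_nonneg_left hΔ (deriv_nonneg_of_monotoneOn_Ici hgmono (hpos ξ))
    _ ≤ lap (g ∘ φε) ξ := by
        rw [hlap', Finset.mul_sum]
        refine Finset.sum_le_sum fun i _ => ?_
        rw [dirD_dirD_comp hg hh]
        have := mul_nonneg (deriv_deriv_nonneg_of_convexOn hg1 hgconv (hpos ξ))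
          (sq_nonneg (dirD (e i) φε ξ))
        linarith
end
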